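/- Let A be a linear endomorphism of a finite-dimensional vector space V over a field F whose minimal polynomial is p^r with p irreducible and separable. Then there exists a subspace of V that is characteristic for A but not hyperinvariant for A if and only if: F has exactly two elements, p has degree 1 (say p = x − λ, so that N = A − λ·id is nilpotent), and there exist positive integers r' and s with s > r' + 1 such that the Jordan form of N has exactly one block of size s and exactly one block of size r', i.e., 2·dim ker(N^s) − dim ker(N^{s−1}) − dim ker(N^{s+1}) = 1 and 2·dim ker(N^{r'}) − dim ker(N^{r'−1}) − dim ker(N^{r'+1}) = 1. -/

import Mathlib

/-- A subspace `Y` is hyperinvariant for `A` if `g Y ⊆ Y` for every endomorphism `g`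
commuting with `A`. -/
def HyperinvariantSubspace {F V : Type*} [Field F] [AddCommGroup V] [Module F V]
    (A : Module.End F V) (Y : Submodule F V) : Prop :=
  ∀ g : Module.End F V, Commute g A → ∀ x ∈ Y, g x ∈ Y

/-- A subspace `Y` is characteristic for `A` if it is `A`-invariant and `g Y ⊆ Y` for every
invertible endomorphism `g` commuting with `A`. -/
def CharacteristicSubspace {F V : Type*} [Field F] [AddCommGroup V] [Module F V]
    (A : Module.End F V) (Y : Submodule F V) : Prop :=
  (∀ x ∈ Y, A x ∈ Y) ∧
    ∀ g : Module.End F V, IsUnit g → Commute g A → ∀ x ∈ Y, g x ∈ Y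

/-
View `V` as the `F[X]`-module `M` on which `X` acts as `A`: endomorphisms commuting with `A` become
`F[X]`-linear, so the question is whether some characteristic submodule of the `p`-primary module
`M = ⨁ R ⧸ (p ^ k i)` over the PID `R = F[X]` is not fully invariant.

If `e` is the projection onto a cyclic summand, then `(1 - e) f e` squares to zero, so
`1 + (1 - e) f e` is an automorphism and every characteristic `Y` is stable under `(1 - e) f e`.
Hence `Y` is fully invariant as soon as it is stable under all the projections `e i`. Scaling the
`i`-th summand by a unit `a` such that `a - 1` is also a unit shows that stability can fail only if
`|R ⧸ (p)| = 2`. Exchanging components between summands shows that it can fail only at an exponent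
`k i` which occurs once, and that it cannot fail only at one `i`, nor only at two exponents
differing by `1`.

Conversely, let `|R ⧸ (p)| = 2` and let `m + 1` and `n + 1`, with `m + 1 < n`, each occur once as an
exponent. Then the Ulm–Kaplansky factors of `M` of index `m` and `n` have order two, so every
automorphism fixes their generators `x` and `y`. Consequently `x + p y` spans, modulo a suitable
fully invariant submodule, a diagonal line that is fixed by every automorphism, whereas the
projection onto the summand of exponent `m + 1` sends `x + p y` to `x`, which is not on that line.
-/

open Submodule

section Invariance

variable {R M : Type*} [CommRing R] [AddCommGroup M] [Module R M]

/-- A submodule that every automorphism maps into itself. -/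
def IsCharacteristicSubmodule (Y : Submodule R M) : Prop :=
  ∀ f : Module.End R M, IsUnit f → Y ≤ Y.comap f

theorem IsCharacteristicSubmodule.le_comap_of_isUnit_one_add {Y : Submodule R M}
    (hY : IsCharacteristicSubmodule Y) {f : Module.End R M} (hf : IsUnit (1 + f)) :
    Y ≤ Y.comap f := fun y hy => by
  simpa using Y.sub_mem (hY _ hf hy) hy

theorem IsCharacteristicSubmodule.le_comap_of_isIdempotentElem {Y : Submodule R M}
    (hY : IsCharacteristicSubmodule Y) {e : Module.End R M} (he : IsIdempotentElem e)
    (f : Module.End R M) : Y ≤ Y.comap ((1 - e) * f * e) := by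
  have hsq : ((1 - e) * f * e) ^ 2 = 0 := by
    rw [sq, mul_assoc _ e, ← mul_assoc e, ← mul_assoc e, he.mul_one_sub_self]
    simp
  exact hY.le_comap_of_isUnit_one_add (IsNilpotent.isUnit_one_add ⟨2, hsq⟩)

theorem isFullyInvariant_torsionBy (a : R) : (torsionBy R M a).IsFullyInvariant := fun f x hx => by
  rw [mem_torsionBy_iff] at hx
  rw [mem_comap, mem_torsionBy_iff, ← map_smul, hx, map_zero]

theorem isFullyInvariant_sup {Y Z : Submodule R M} (hY : Y.IsFullyInvariant)
    (hZ : Z.IsFullyInvariant) : (Y ⊔ Z).IsFullyInvariant := fun f =>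
  sup_le ((hY f).trans (comap_mono le_sup_left)) ((hZ f).trans (comap_mono le_sup_right))

theorem isFullyInvariant_map_lsmul {Y : Submodule R M} (hY : Y.IsFullyInvariant) (a : R) :
    (Y.map (LinearMap.lsmul R M a)).IsFullyInvariant := by
  rintro f _ ⟨y, hy, rfl⟩
  exact ⟨f y, hY f hy, (map_smul f a y).symm⟩

end Invariance

section Residues

variable {R M : Type*} [CommRing R] [AddCommGroup M] [Module R M] {p : R}

theorem natCard_quotient_span_singleton_eq_two_iff (hp : ¬IsUnit p) :
    Nat.card (R ⧸ Ideal.span {p}) = 2 ↔ ∀ a, p ∣ a ∨ p ∣ a - 1 := by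
  have : Nontrivial (R ⧸ Ideal.span {p}) :=
    Ideal.Quotient.nontrivial_iff.2 (by rwa [Ne, Ideal.span_singleton_eq_top])
  simp_rw [← Ideal.mem_span_singleton, ← Ideal.Quotient.eq_zero_iff_mem, map_sub, map_one,
    sub_eq_zero]
  rw [Nat.card_eq_two_iff' 0, ← Ideal.Quotient.mk_surjective.forall
    (p := fun x : R ⧸ Ideal.span {p} => x = 0 ∨ x = 1)]
  refine ⟨fun ⟨u, _, hu⟩ x => or_iff_not_imp_left.2 fun hx => ?_, fun h => ⟨1, one_ne_zero, ?_⟩⟩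
  · rw [hu x hx, hu 1 one_ne_zero]
  · exact fun x hx => (h x).resolve_left hx

theorem mem_sup_span_singleton_of_residues (hres : ∀ a, p ∣ a ∨ p ∣ a - 1) {D : Submodule R M}
    {z v : M} (hz : p • z ∈ D) (hv : v ∈ D ⊔ R ∙ z) : v ∈ D ∨ v - z ∈ D := by
  obtain ⟨w, hw, _, hy, rfl⟩ := mem_sup.1 hv
  obtain ⟨t, rfl⟩ := mem_span_singleton.1 hy
  rcases hres t with ⟨s, hs⟩ | ⟨s, hs⟩
  · left
    rw [hs, mul_comm, mul_smul]
    exact D.add_mem hw (D.smul_mem s hz)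
  · right
    rw [add_sub_assoc, ← one_smul R z, smul_smul, mul_one, ← sub_smul, hs, mul_comm, mul_smul]
    exact D.add_mem hw (D.smul_mem s hz)

theorem mem_span_pair_or_mem_span_mul_pair [IsDomain R] [IsPrincipalIdealRing R]
    (hp : Prime p) (a b : R) (m : ℕ) :
    b ∈ Ideal.span {a, p ^ m} ∨ a ∈ Ideal.span {p * b, p ^ m} := by
  have span_pair_eq (a : R) : ∃ i, Ideal.span {a, p ^ m} = Ideal.span {p ^ i} := by
    obtain ⟨g, hg⟩ := IsPrincipalIdealRing.principal (Ideal.span {a, p ^ m})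
    have hgp : g ∣ p ^ m := by
      rw [← Ideal.mem_span_singleton, Ideal.span, ← hg]
      exact Ideal.subset_span (by simp)
    obtain ⟨i, -, hgi⟩ := (dvd_prime_pow hp m).1 hgp
    exact ⟨i, hg.trans (Ideal.span_singleton_eq_span_singleton.2 hgi)⟩
  obtain ⟨i, hi⟩ := span_pair_eq a
  obtain ⟨j, hj⟩ := span_pair_eq b
  have ha : a ∈ Ideal.span {p ^ i} := hi ▸ Ideal.subset_span (by simp)
  have hb : b ∈ Ideal.span {p ^ j} := hj ▸ Ideal.subset_span (by simp)
  rcases le_or_gt i j with hij | hij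
  · exact .inl (hi ▸ Ideal.span_singleton_le_span_singleton.2 (pow_dvd_pow p hij) hb)
  · obtain ⟨s, hs⟩ := (pow_dvd_pow p hij).trans (Ideal.mem_span_singleton.1 ha)
    obtain ⟨t, v, htv⟩ := Ideal.mem_span_pair.1 (hj ▸ Ideal.mem_span_singleton_self (p ^ j))
    refine .inr (Ideal.mem_span_pair.2 ⟨s * t, s * p * v, ?_⟩)
    rw [hs, pow_succ]
    linear_combination s * p * htv

end Residues

section Layers

variable {R M : Type*} [CommRing R] [AddCommGroup M] [Module R M] {p : R}

theorem torsionBy_pow_le {m n : ℕ} (h : m ≤ n) : torsionBy R M (p ^ m) ≤ torsionBy R M (p ^ n) :=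
  torsionBy_le_torsionBy_of_dvd _ _ (pow_dvd_pow p h)

theorem smul_mem_torsionBy_pow {n : ℕ} {x : M} :
    p • x ∈ torsionBy R M (p ^ n) ↔ x ∈ torsionBy R M (p ^ (n + 1)) := by
  simp_rw [mem_torsionBy_iff, smul_smul, pow_succ]

variable (R M p)

/-- The part `M[pⁿ] + p M[pⁿ⁺²]` of `M[pⁿ⁺¹]` coming from the cyclic summands `R ⧸ (pᵏ)` of `M` with
`k ≠ n + 1`; the quotient is the `n`-th Ulm–Kaplansky factor of `M`. -/
def layerBase (n : ℕ) : Submodule R M :=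
  torsionBy R M (p ^ n) ⊔ (torsionBy R M (p ^ (n + 2))).map (LinearMap.lsmul R M p)

/-- The order of the `n`-th Ulm–Kaplansky factor of `M` at `p`, that is `|R ⧸ (p)|` to the number
of cyclic summands `R ⧸ (pⁿ⁺¹)`; it is `0` when this order is infinite. -/
noncomputable def layerIndex (n : ℕ) : ℕ :=
  (layerBase R M p n).toAddSubgroup.relIndex (torsionBy R M (p ^ (n + 1))).toAddSubgroup

variable {R M p}

theorem layerBase_le (n : ℕ) : layerBase R M p n ≤ torsionBy R M (p ^ (n + 1)) := by
  refine sup_le (torsionBy_pow_le n.le_succ) ?_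
  rintro _ ⟨x, hx, rfl⟩
  exact smul_mem_torsionBy_pow.2 hx

theorem isFullyInvariant_layerBase (n : ℕ) : (layerBase R M p n).IsFullyInvariant :=
  isFullyInvariant_sup (isFullyInvariant_torsionBy _)
    (isFullyInvariant_map_lsmul (isFullyInvariant_torsionBy _) p)

theorem smul_mem_layerBase {n : ℕ} {x : M} (hx : x ∈ torsionBy R M (p ^ (n + 1))) :
    p • x ∈ layerBase R M p n :=
  mem_sup_left (smul_mem_torsionBy_pow.2 hx)

theorem layerIndex_eq_two_iff {n : ℕ} :
    layerIndex R M p n = 2 ↔ ∃ x ∈ torsionBy R M (p ^ (n + 1)), x ∉ layerBase R M p n ∧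
      ∀ y ∈ torsionBy R M (p ^ (n + 1)), y + x ∈ layerBase R M p n ∨ y ∈ layerBase R M p n :=
  AddSubgroup.relIndex_eq_two_iff_exists_notMem_and

theorem relIndex_torsionBy_pow_eq_mul_layerIndex (n : ℕ) :
    (torsionBy R M (p ^ n)).toAddSubgroup.relIndex (torsionBy R M (p ^ (n + 1))).toAddSubgroup =
      (torsionBy R M (p ^ (n + 1))).toAddSubgroup.relIndex
        (torsionBy R M (p ^ (n + 2))).toAddSubgroup * layerIndex R M p n := by
  let T (m : ℕ) : AddSubgroup M := (torsionBy R M (p ^ m)).toAddSubgroup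
  let μ : M →+ M := (LinearMap.lsmul R M p).toAddMonoidHom
  have hbase : (layerBase R M p n).toAddSubgroup = T n ⊔ (T (n + 2)).map μ :=
    sup_toAddSubgroup _ _
  have hcomap : (T n).comap μ = T (n + 1) := by
    ext x
    exact smul_mem_torsionBy_pow
  calc (T n).relIndex (T (n + 1))
      = (T n).relIndex (layerBase R M p n).toAddSubgroup * layerIndex R M p n :=
        (AddSubgroup.relIndex_mul_relIndex _ _ _ (hbase ▸ le_sup_left) (layerBase_le n)).symm
    _ = (T (n + 1)).relIndex (T (n + 2)) * layerIndex R M p n := by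
        rw [hbase, AddSubgroup.relIndex_sup_left, ← AddSubgroup.relIndex_comap, hcomap]

theorem natCard_torsionBy_pow_sq [Finite M] (n : ℕ) :
    Nat.card (torsionBy R M (p ^ (n + 1))) ^ 2 =
      Nat.card (torsionBy R M (p ^ n)) * Nat.card (torsionBy R M (p ^ (n + 2))) *
        layerIndex R M p n := by
  let T (m : ℕ) : AddSubgroup M := (torsionBy R M (p ^ m)).toAddSubgroup
  have hcard (m : ℕ) : Nat.card (T m) * (T m).relIndex (T (m + 1)) = Nat.card (T (m + 1)) := by
    simpa only [AddSubgroup.relIndex_bot_left] using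
      AddSubgroup.relIndex_mul_relIndex ⊥ (T m) (T (m + 1)) bot_le (torsionBy_pow_le m.le_succ)
  calc Nat.card (T (n + 1)) ^ 2
      = Nat.card (T (n + 1)) * (Nat.card (T n) * (T n).relIndex (T (n + 1))) := by
        rw [hcard, sq]
    _ = Nat.card (T (n + 1)) * (Nat.card (T n) *
          ((T (n + 1)).relIndex (T (n + 2)) * layerIndex R M p n)) := by
        rw [relIndex_torsionBy_pow_eq_mul_layerIndex n]
    _ = Nat.card (T n) * Nat.card (T (n + 2)) * layerIndex R M p n := by
        rw [← hcard (n + 1)]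
        ring

theorem sub_mem_layerBase_of_notMem {n : ℕ} (h : layerIndex R M p n = 2) {x y : M}
    (hx : x ∈ torsionBy R M (p ^ (n + 1))) (hxn : x ∉ layerBase R M p n)
    (hy : y ∈ torsionBy R M (p ^ (n + 1))) (hyn : y ∉ layerBase R M p n) :
    x - y ∈ layerBase R M p n := by
  obtain ⟨a, -, -, ha⟩ := layerIndex_eq_two_iff.1 h
  have := sub_mem ((ha x hx).resolve_right hxn) ((ha y hy).resolve_right hyn)
  rwa [add_sub_add_right_eq_sub] at this

theorem apply_sub_mem_layerBase {n : ℕ} (h : layerIndex R M p n = 2) {g : Module.End R M}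
    (hg : IsUnit g) {x : M} (hx : x ∈ torsionBy R M (p ^ (n + 1))) (hxn : x ∉ layerBase R M p n) :
    g x - x ∈ layerBase R M p n := by
  refine sub_mem_layerBase_of_notMem h (isFullyInvariant_torsionBy _ g hx) (fun hgx => hxn ?_)
    hx hxn
  obtain ⟨u, rfl⟩ := hg
  have := isFullyInvariant_layerBase n (↑u⁻¹ : Module.End R M) hgx
  rwa [mem_comap, ← Module.End.mul_apply, u.inv_mul, Module.End.one_apply] at this

end Layers

section Decomposition

variable {R M ι : Type*} [CommRing R] [AddCommGroup M] [Module R M] [Fintype ι]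

/-- The idempotents `e i` exhibit `M` as the direct sum of the cyclic submodules `R ∙ c i`, each
isomorphic to `R ⧸ (p ^ k i)`; exponents `k i = 0`, that is zero summands, are allowed. -/
structure IsPrimaryCyclicDecomposition (p : R) (k : ι → ℕ) (c : ι → M)
    (e : ι → Module.End R M) : Prop extends CompleteOrthogonalIdempotents e where
  range_eq : ∀ i, LinearMap.range (e i) = R ∙ c i
  torsionOf_eq : ∀ i, Ideal.torsionOf R M (c i) = Ideal.span {p ^ k i}

namespace IsPrimaryCyclicDecomposition

variable {p : R} {k : ι → ℕ} {c : ι → M} {e : ι → Module.End R M}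

theorem smul_gen_eq_zero_iff (h : IsPrimaryCyclicDecomposition p k c e) (i : ι) (a : R) :
    a • c i = 0 ↔ p ^ k i ∣ a := by
  rw [← Ideal.mem_torsionOf_iff, h.torsionOf_eq, Ideal.mem_span_singleton]

theorem pow_smul_gen (h : IsPrimaryCyclicDecomposition p k c e) (i : ι) : p ^ k i • c i = 0 :=
  (h.smul_gen_eq_zero_iff i _).2 dvd_rfl

theorem exists_apply_eq_smul_gen (h : IsPrimaryCyclicDecomposition p k c e) (i : ι) (x : M) :
    ∃ a : R, e i x = a • c i := by
  have hx : e i x ∈ R ∙ c i := h.range_eq i ▸ LinearMap.mem_range_self _ x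
  obtain ⟨a, ha⟩ := mem_span_singleton.1 hx
  exact ⟨a, ha.symm⟩

theorem pow_smul_apply (h : IsPrimaryCyclicDecomposition p k c e) (i : ι) (x : M) :
    p ^ k i • e i x = 0 := by
  obtain ⟨a, ha⟩ := h.exists_apply_eq_smul_gen i x
  rw [ha, smul_comm, h.pow_smul_gen, smul_zero]

theorem apply_gen (h : IsPrimaryCyclicDecomposition p k c e) (i : ι) : e i (c i) = c i := by
  obtain ⟨x, hx⟩ : c i ∈ LinearMap.range (e i) := h.range_eq i ▸ mem_span_singleton_self _
  rw [← hx, ← Module.End.mul_apply, h.idem i]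

theorem apply_gen_of_ne (h : IsPrimaryCyclicDecomposition p k c e) {i j : ι} (hij : i ≠ j) :
    e i (c j) = 0 := by
  rw [← h.apply_gen j, ← Module.End.mul_apply, h.ortho hij, LinearMap.zero_apply]

theorem sum_apply (h : IsPrimaryCyclicDecomposition p k c e) (x : M) : ∑ i, e i x = x := by
  rw [← LinearMap.sum_apply, h.complete, Module.End.one_apply]

theorem exists_end_apply_gen_eq (h : IsPrimaryCyclicDecomposition p k c e) {i : ι} {y : M}
    (hy : p ^ k i • y = 0) : ∃ f : Module.End R M, f (c i) = y := by
  have hker : Ideal.torsionOf R M (c i) ≤ Ideal.torsionOf R M y := by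
    rwa [h.torsionOf_eq, Ideal.span_singleton_le_iff_mem, Ideal.mem_torsionOf_iff]
  let φ : (R ∙ c i) →ₗ[R] M := (Ideal.torsionOf R M (c i)).liftQ (LinearMap.toSpanSingleton R M y)
    hker ∘ₗ (Ideal.quotTorsionOfEquivSpanSingleton R M (c i)).symm
  let π : M →ₗ[R] (R ∙ c i) := (e i).codRestrict _ fun x =>
    h.range_eq i ▸ LinearMap.mem_range_self _ x
  refine ⟨φ ∘ₗ π, ?_⟩
  have hπ : (Ideal.quotTorsionOfEquivSpanSingleton R M (c i)).symm (π (c i)) =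
      Submodule.Quotient.mk 1 := by
    rw [LinearEquiv.symm_apply_eq, Ideal.quotTorsionOfEquivSpanSingleton_apply_mk, one_smul]
    exact Subtype.ext (h.apply_gen i)
  calc φ (π (c i)) = (Ideal.torsionOf R M (c i)).liftQ (LinearMap.toSpanSingleton R M y) hker
        (Submodule.Quotient.mk 1) := by rw [← hπ]; rfl
    _ = y := one_smul R y

theorem exists_of_isTorsion'_powers [IsDomain R] [IsPrincipalIdealRing R] [Module.Finite R M]
    (hp : Irreducible p) (hM : Module.IsTorsion' M (Submonoid.powers p)) :
    ∃ (d : ℕ) (k : Fin d → ℕ) (c : Fin d → M) (e : Fin d → Module.End R M),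
      IsPrimaryCyclicDecomposition p k c e := by
  obtain ⟨d, k, ⟨φ₀⟩⟩ := Module.torsion_by_prime_power_decomposition hp hM
  let φ : M ≃ₗ[R] (i : Fin d) → R ⧸ R ∙ p ^ k i :=
    φ₀.trans (DirectSum.linearEquivFunOnFintype R _ _)
  let e₀ (i : Fin d) : Module.End R ((i : Fin d) → R ⧸ R ∙ p ^ k i) :=
    LinearMap.single R _ i ∘ₗ LinearMap.proj i
  have he₀ (i : Fin d) (v) : e₀ i v = Pi.single i (v i) := rfl
  have hmk (i : Fin d) (a : R) : a • (Submodule.Quotient.mk 1 : R ⧸ R ∙ p ^ k i) =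
      Submodule.Quotient.mk a := by
    rw [← Submodule.Quotient.mk_smul, smul_eq_mul, mul_one]
  refine ⟨d, k, fun i => φ.symm (Pi.single i (Submodule.Quotient.mk 1)),
    fun i => φ.symm.conj (e₀ i),
    CompleteOrthogonalIdempotents.iff_ortho_complete.2 ⟨?_, ?_⟩, ?_, ?_⟩
  · intro i j hij
    ext x
    simp [he₀, LinearEquiv.conj_apply, hij]
  · ext x
    simp [he₀, LinearEquiv.conj_apply, ← map_sum, Finset.univ_sum_single]
  · intro i
    refine le_antisymm ?_ ?_
    · rintro _ ⟨x, rfl⟩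
      obtain ⟨a, ha⟩ := Submodule.Quotient.mk_surjective _ (φ x i)
      refine mem_span_singleton.2 ⟨a, ?_⟩
      rw [← map_smul, ← Pi.single_smul, hmk, ha]
      simp [he₀, LinearEquiv.conj_apply]
    · rw [span_singleton_le_iff_mem]
      exact ⟨φ.symm (Pi.single i (Submodule.Quotient.mk 1)), by simp [he₀, LinearEquiv.conj_apply]⟩
  · intro i
    ext a
    rw [Ideal.mem_torsionOf_iff, ← map_smul, LinearEquiv.map_eq_zero_iff, ← Pi.single_smul,
      Pi.single_eq_zero_iff, hmk, Submodule.Quotient.mk_eq_zero]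

end IsPrimaryCyclicDecomposition

end Decomposition

section Forward

variable {R M ι : Type*} [CommRing R] [AddCommGroup M] [Module R M] [Fintype ι]
  {p : R} {k : ι → ℕ} {c : ι → M} {e : ι → Module.End R M} {Y : Submodule R M}

namespace IsPrimaryCyclicDecomposition

theorem smul_mem_of_apply_eq_smul_gen (h : IsPrimaryCyclicDecomposition p k c e)
    (hY : IsCharacteristicSubmodule Y) {i : ι} {a : R} {y : M} (hy : y ∈ Y) (hya : e i y = a • c i)
    {z : M} (hz : p ^ k i • z = 0) (hez : e i z = 0) : a • z ∈ Y := by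
  obtain ⟨f, hf⟩ := h.exists_end_apply_gen_eq hz
  have := hY.le_comap_of_isIdempotentElem (h.idem i) f hy
  simpa [hya, hf, hez] using this

theorem isFullyInvariant_of_forall_le_comap (h : IsPrimaryCyclicDecomposition p k c e)
    (hY : IsCharacteristicSubmodule Y) (hstable : ∀ i, Y ≤ Y.comap (e i)) :
    Y.IsFullyInvariant := by
  intro f y hy
  have hdiag (i : ι) : e i (f (e i y)) ∈ Y := by
    obtain ⟨a, ha⟩ := h.exists_apply_eq_smul_gen i (f (c i))
    obtain ⟨b, hb⟩ := h.exists_apply_eq_smul_gen i y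
    have : e i (f (e i y)) = a • e i y := by
      rw [hb, map_smul, map_smul, ha, smul_comm]
    exact this ▸ Y.smul_mem a (hstable i hy)
  have hoff (i : ι) : f (e i y) - e i (f (e i y)) ∈ Y :=
    hY.le_comap_of_isIdempotentElem (h.idem i) f hy
  rw [mem_comap, ← h.sum_apply y, map_sum]
  exact sum_mem fun i _ => by simpa using add_mem (hoff i) (hdiag i)

theorem exists_mul_smul_apply_eq (h : IsPrimaryCyclicDecomposition p k c e) [IsDomain R]
    [IsPrincipalIdealRing R] (hp : Prime p) {a : R} (ha : ¬p ∣ a) (i : ι) :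
    ∃ u : R, (u * a) • e i = e i := by
  have hcop : IsCoprime a (p ^ k i) :=
    (hp.irreducible.coprime_iff_not_dvd.2 ha).symm.pow_right
  obtain ⟨u, v, huv⟩ := hcop
  refine ⟨u, LinearMap.ext fun x => ?_⟩
  rw [LinearMap.smul_apply, eq_sub_of_add_eq huv, sub_smul, one_smul, mul_smul,
    h.pow_smul_apply, smul_zero, sub_zero]

theorem le_comap_of_not_dvd_of_not_dvd_sub_one (h : IsPrimaryCyclicDecomposition p k c e)
    [IsDomain R] [IsPrincipalIdealRing R] (hp : Prime p) (hY : IsCharacteristicSubmodule Y) {a : R}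
    (ha : ¬p ∣ a) (ha' : ¬p ∣ a - 1) (i : ι) : Y ≤ Y.comap (e i) := by
  obtain ⟨u, hu⟩ := h.exists_mul_smul_apply_eq hp ha i
  obtain ⟨w, hw⟩ := h.exists_mul_smul_apply_eq hp ha' i
  -- `1 + (b - 1) • e i` multiplies the `i`-th component by `b` and fixes the others.
  have hinv (b b' : R) (hb : (b' * b) • e i = e i) :
      (1 + (b - 1) • e i) * (1 + (b' - 1) • e i) = 1 := by
    have hee : e i * e i = e i := h.idem i
    simp only [mul_add, add_mul, one_mul, mul_one, smul_mul_smul_comm, hee]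
    linear_combination (norm := module) hb
  have hunit : IsUnit (1 + (a - 1) • e i) :=
    isUnit_iff_exists.2 ⟨_, hinv a u hu, hinv u a (by rwa [mul_comm])⟩
  intro y hy
  have := Y.smul_mem w (hY.le_comap_of_isUnit_one_add hunit hy)
  rwa [LinearMap.smul_apply, smul_smul, ← LinearMap.smul_apply, hw] at this

theorem le_comap_of_exponent_eq_zero (h : IsPrimaryCyclicDecomposition p k c e) {i : ι}
    (hi : k i = 0) : Y ≤ Y.comap (e i) := fun y _ => by
  have := h.pow_smul_apply i y
  rw [hi, pow_zero, one_smul] at this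
  rw [mem_comap, this]
  exact Y.zero_mem

theorem le_comap_of_exponent_eq (h : IsPrimaryCyclicDecomposition p k c e)
    (hY : IsCharacteristicSubmodule Y) {i j : ι} (hij : i ≠ j) (hk : k i = k j) :
    Y ≤ Y.comap (e i) := fun y hy => by
  obtain ⟨a, ha⟩ := h.exists_apply_eq_smul_gen i y
  have haj : a • c j ∈ Y :=
    h.smul_mem_of_apply_eq_smul_gen hY hy ha (hk ▸ h.pow_smul_gen j) (h.apply_gen_of_ne hij)
  rw [mem_comap, ha]
  exact h.smul_mem_of_apply_eq_smul_gen hY haj (by rw [map_smul, h.apply_gen])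
    (hk ▸ h.pow_smul_gen i) (h.apply_gen_of_ne hij.symm)

theorem apply_mem_of_apply_add_apply_mem (h : IsPrimaryCyclicDecomposition p k c e) [IsDomain R]
    [IsPrincipalIdealRing R] (hp : Prime p) (hY : IsCharacteristicSubmodule Y) {i j : ι}
    (hk : k j = k i + 1) {y : M} (hy : y ∈ Y) (hyij : e i y + e j y ∈ Y) : e i y ∈ Y := by
  have hij : i ≠ j := by
    rintro rfl
    omega
  obtain ⟨a, ha⟩ := h.exists_apply_eq_smul_gen i y
  obtain ⟨b, hb⟩ := h.exists_apply_eq_smul_gen j y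
  have hbi : b • c i ∈ Y := h.smul_mem_of_apply_eq_smul_gen hY hy hb
    (by rw [hk, pow_succ', mul_smul, h.pow_smul_gen, smul_zero]) (h.apply_gen_of_ne hij.symm)
  have haj : a • p • c j ∈ Y := h.smul_mem_of_apply_eq_smul_gen hY hy ha
    (by rw [smul_smul, ← pow_succ, ← hk, h.pow_smul_gen])
    (by rw [map_smul, h.apply_gen_of_ne hij, smul_zero])
  rcases mem_span_pair_or_mem_span_mul_pair hp b a (k j) with hab | hba
  · obtain ⟨s, t, hst⟩ := Ideal.mem_span_pair.1 hab
    have : a • c i = s • b • c i := by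
      rw [← hst, hk, add_smul, mul_smul, mul_smul, pow_succ', mul_smul, h.pow_smul_gen, smul_zero,
        smul_zero, add_zero]
    rw [ha, this]
    exact Y.smul_mem s hbi
  · obtain ⟨s, t, hst⟩ := Ideal.mem_span_pair.1 hba
    have : b • c j = s • a • p • c j := by
      rw [← hst, add_smul, mul_smul t, h.pow_smul_gen, smul_zero, add_zero, mul_comm p, mul_smul,
        mul_smul]
    refine (Y.add_mem_iff_left ?_).1 hyij
    rw [hb, this]
    exact Y.smul_mem s haj

theorem sum_apply_mem_of_forall_notMem (h : IsPrimaryCyclicDecomposition p k c e) {B : Finset ι}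
    (hB : ∀ i ∉ B, Y ≤ Y.comap (e i)) {y : M} (hy : y ∈ Y) : ∑ i ∈ B, e i y ∈ Y := by
  classical
  have hcompl : ∑ i ∈ Bᶜ, e i y ∈ Y := sum_mem fun i hi => hB i (Finset.mem_compl.1 hi) hy
  rwa [← Y.add_mem_iff_left hcompl, Finset.sum_add_sum_compl, h.sum_apply]

theorem exists_not_le_comap_of_not_isFullyInvariant (h : IsPrimaryCyclicDecomposition p k c e)
    [IsDomain R] [IsPrincipalIdealRing R] (hp : Prime p) (hY : IsCharacteristicSubmodule Y)
    (hYn : ¬Y.IsFullyInvariant) :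
    ∃ i j, k i + 1 < k j ∧ ¬Y ≤ Y.comap (e i) ∧ ¬Y ≤ Y.comap (e j) := by
  classical
  let B : Finset ι := {i | ¬Y ≤ Y.comap (e i)}
  have hB (i : ι) : i ∈ B ↔ ¬Y ≤ Y.comap (e i) := by simp [B]
  have hsum {y : M} (hy : y ∈ Y) : ∑ i ∈ B, e i y ∈ Y :=
    h.sum_apply_mem_of_forall_notMem (fun i hi => not_not.1 (mt (hB i).2 hi)) hy
  obtain ⟨i₀, hi₀⟩ := not_forall.1 (mt (h.isFullyInvariant_of_forall_le_comap hY) hYn)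
  obtain ⟨i, hi, hmin⟩ := B.exists_min_image k ⟨i₀, (hB i₀).2 hi₀⟩
  have hinj : Set.InjOn k B := fun a ha b _ hab => by
    by_contra hne
    exact (hB a).1 ha (h.le_comap_of_exponent_eq hY hne hab)
  by_contra! hgap
  have hnear {j : ι} (hj : j ∈ B) : k j = k i ∨ k j = k i + 1 := by
    have := hmin j hj
    have : ¬k i + 1 < k j := fun hlt => (hB j).1 hj (hgap i j hlt ((hB i).1 hi))
    omega
  refine (hB i).1 hi fun y hy => ?_
  by_cases hadj : ∃ j ∈ B, k j = k i + 1
  · obtain ⟨j, hj, hk⟩ := hadj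
    have hBij : B = {i, j} := by
      ext l
      rw [Finset.mem_insert, Finset.mem_singleton]
      refine ⟨fun hl => (hnear hl).imp (hinj hl hi) fun hlk => hinj hl hj (hlk.trans hk.symm), ?_⟩
      rintro (rfl | rfl) <;> assumption
    have hij : i ≠ j := by
      rintro rfl
      omega
    refine h.apply_mem_of_apply_add_apply_mem hp hY hk hy ?_
    rw [← Finset.sum_pair (f := fun l => e l y) hij, ← hBij]
    exact hsum hy
  · have hBi : B = {i} := Finset.eq_singleton_iff_unique_mem.2 ⟨hi, fun l hl =>
      hinj hl hi ((hnear hl).resolve_right fun hlk => hadj ⟨l, hl, hlk⟩)⟩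
    have := hsum hy
    rwa [hBi, Finset.sum_singleton] at this

theorem apply_mem_layerBase (h : IsPrimaryCyclicDecomposition p k c e) [IsDomain R] (hp : p ≠ 0)
    {n : ℕ} {i : ι} (hi : k i ≠ n + 1) {x : M} (hx : x ∈ torsionBy R M (p ^ (n + 1))) :
    e i x ∈ layerBase R M p n := by
  rcases Nat.lt_or_gt_of_ne hi with hlt | hgt
  · exact mem_sup_left (torsionBy_pow_le (Nat.le_of_lt_succ hlt) (h.pow_smul_apply i x))
  · obtain ⟨a, ha⟩ := h.exists_apply_eq_smul_gen i x
    have hei : e i x ∈ torsionBy R M (p ^ (n + 1)) := isFullyInvariant_torsionBy _ _ hx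
    have hdvd : p ^ (n + 1) * p ∣ p ^ (n + 1) * a := by
      rw [mem_torsionBy_iff, ha, smul_smul, h.smul_gen_eq_zero_iff] at hei
      exact (pow_succ p (n + 1) ▸ pow_dvd_pow p hgt).trans hei
    obtain ⟨b, rfl⟩ := (mul_dvd_mul_iff_left (pow_ne_zero _ hp)).1 hdvd
    rw [ha, mul_smul] at hei ⊢
    exact mem_sup_right (mem_map_of_mem (smul_mem_torsionBy_pow.1 hei))

theorem gen_notMem_layerBase (h : IsPrimaryCyclicDecomposition p k c e) [IsDomain R] (hp : Prime p)
    {n : ℕ} {i : ι} (hi : k i = n + 1) : c i ∉ layerBase R M p n := by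
  intro hmem
  obtain ⟨u, hu, _, ⟨v, -, rfl⟩, huv⟩ := mem_sup.1 hmem
  have hzero : p ^ n • c i = 0 := calc
    p ^ n • c i = p ^ n • e i (u + p • v) := by
      rw [← h.apply_gen i, ← huv]
      rfl
    _ = e i (p ^ n • u) + p ^ k i • e i v := by
      rw [map_add, map_smul, smul_add, smul_smul, ← pow_succ, hi, map_smul]
    _ = 0 := by rw [(mem_torsionBy_iff _ _).1 hu, map_zero, h.pow_smul_apply, add_zero]
  rw [h.smul_gen_eq_zero_iff, hi, pow_dvd_pow_iff hp.ne_zero hp.not_isUnit] at hzero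
  omega

theorem layerIndex_eq_two (h : IsPrimaryCyclicDecomposition p k c e) [IsDomain R] (hp : Prime p)
    (hres : ∀ a, p ∣ a ∨ p ∣ a - 1) {n : ℕ} {i : ι} (hi : k i = n + 1)
    (huniq : ∀ j ≠ i, k j ≠ n + 1) : layerIndex R M p n = 2 := by
  classical
  have hci : c i ∈ torsionBy R M (p ^ (n + 1)) := hi ▸ h.pow_smul_gen i
  have hdvd {a : R} (ha : p ∣ a) : a • c i ∈ layerBase R M p n := by
    obtain ⟨b, rfl⟩ := ha
    rw [mul_comm, mul_smul]
    exact smul_mem _ b (smul_mem_layerBase hci)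
  refine layerIndex_eq_two_iff.2 ⟨c i, hci, h.gen_notMem_layerBase hp hi, fun y hy => ?_⟩
  obtain ⟨a, ha⟩ := h.exists_apply_eq_smul_gen i y
  have hrest : ∑ j ∈ Finset.univ.erase i, e j y ∈ layerBase R M p n :=
    sum_mem fun j hj => h.apply_mem_layerBase hp.ne_zero (huniq j (Finset.ne_of_mem_erase hj)) hy
  have hyi : y = ∑ j ∈ Finset.univ.erase i, e j y + a • c i := by
    rw [← ha, Finset.sum_erase_add _ _ (Finset.mem_univ i), h.sum_apply]
  have hsucc : a • c i + c i = (a + 1) • c i := by rw [add_smul, one_smul]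
  rw [hyi, add_assoc, hsucc, add_mem_cancel_left hrest, add_mem_cancel_left hrest]
  refine (hres (a + 1)).imp hdvd fun h1 => hdvd ?_
  rwa [add_sub_cancel_right] at h1

end IsPrimaryCyclicDecomposition

end Forward

section Diagonal

variable {R M ι : Type*} [CommRing R] [AddCommGroup M] [Module R M] {p : R}

theorem IsPrimaryCyclicDecomposition.exists_end_sub_mem_layerBase [Fintype ι] [IsDomain R]
    {k : ι → ℕ} {c : ι → M} {e : ι → Module.End R M} (h : IsPrimaryCyclicDecomposition p k c e)
    (hp : p ≠ 0) (m : ℕ) :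
    ∃ E : Module.End R M,
      (∀ x ∈ torsionBy R M (p ^ (m + 1)), x - E x ∈ layerBase R M p m) ∧
        ∀ n ≠ m, ∀ y ∈ torsionBy R M (p ^ (n + 1)), E y ∈ layerBase R M p n := by
  classical
  refine ⟨∑ i with k i = m + 1, e i, fun x hx => ?_, fun n hn y hy => ?_⟩
  · have hx_eq : x - (∑ i with k i = m + 1, e i) x = ∑ i with k i ≠ m + 1, e i x := by
      rw [LinearMap.sum_apply, sub_eq_iff_eq_add', Finset.sum_filter_add_sum_filter_not,
        h.sum_apply]
    rw [hx_eq]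
    exact sum_mem fun i hi => h.apply_mem_layerBase hp (Finset.mem_filter.1 hi).2 hx
  · rw [LinearMap.sum_apply]
    refine sum_mem fun i hi => h.apply_mem_layerBase hp ?_ hy
    have := (Finset.mem_filter.1 hi).2
    omega

variable (R M p)

/-- The fully invariant submodule modulo which the order-two Ulm–Kaplansky factors number `m` and
`n` of `M` are glued along their diagonal, the `n`-th one being shifted by multiplication by `p`. -/
def gluingBase (m n : ℕ) : Submodule R M :=
  layerBase R M p m ⊔ (layerBase R M p n).map (LinearMap.lsmul R M p)

variable {R M p} {m n : ℕ} {x y : M}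

theorem isFullyInvariant_gluingBase (m n : ℕ) : (gluingBase R M p m n).IsFullyInvariant :=
  isFullyInvariant_sup (isFullyInvariant_layerBase m)
    (isFullyInvariant_map_lsmul (isFullyInvariant_layerBase n) p)

theorem add_smul_mem_gluingBase {u w : M} (hu : u ∈ layerBase R M p m)
    (hw : w ∈ layerBase R M p n) : u + p • w ∈ gluingBase R M p m n :=
  add_mem (mem_sup_left hu) (mem_sup_right (mem_map_of_mem hw))

theorem mem_layerBase_of_mem_gluingBase (hx : x ∈ torsionBy R M (p ^ (m + 1)))
    (hxD : x ∈ gluingBase R M p m n) : x ∈ layerBase R M p m := by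
  obtain ⟨u, hu, _, ⟨w, -, rfl⟩, rfl⟩ := mem_sup.1 hxD
  have hpw := (add_mem_cancel_left (layerBase_le m hu)).1 hx
  exact add_mem hu (mem_sup_right (mem_map_of_mem (smul_mem_torsionBy_pow.1 hpw)))

theorem mem_layerBase_of_smul_mem_gluingBase (hmn : m + 1 < n)
    (hyD : p • y ∈ gluingBase R M p m n) : y ∈ layerBase R M p n := by
  obtain ⟨u, hu, _, ⟨w, hw, rfl⟩, huw⟩ := mem_sup.1 hyD
  have hyw : y - w ∈ torsionBy R M (p ^ (m + 2)) := by
    refine smul_mem_torsionBy_pow.1 ?_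
    rw [smul_sub, ← huw, LinearMap.lsmul_apply, add_sub_cancel_right]
    exact layerBase_le m hu
  exact (sub_mem_iff_left _ hw).1 (mem_sup_left (torsionBy_pow_le hmn hyw))

theorem isCharacteristicSubmodule_gluingBase_sup_span
    (hm : layerIndex R M p m = 2) (hn : layerIndex R M p n = 2)
    (hx : x ∈ torsionBy R M (p ^ (m + 1))) (hxm : x ∉ layerBase R M p m)
    (hy : y ∈ torsionBy R M (p ^ (n + 1))) (hyn : y ∉ layerBase R M p n) :
    IsCharacteristicSubmodule (gluingBase R M p m n ⊔ R ∙ (x + p • y)) := by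
  intro f hf
  refine sup_le ((isFullyInvariant_gluingBase m n f).trans (comap_mono le_sup_left)) ?_
  rw [span_singleton_le_iff_mem, mem_comap]
  have hdiff : f (x + p • y) = (f x - x) + p • (f y - y) + (x + p • y) := by
    rw [map_add, map_smul, smul_sub]
    abel
  rw [hdiff]
  exact add_mem_sup (add_smul_mem_gluingBase (apply_sub_mem_layerBase hm hf hx hxm)
    (apply_sub_mem_layerBase hn hf hy hyn)) (mem_span_singleton_self _)

theorem not_isFullyInvariant_gluingBase_sup_span [Fintype ι] [IsDomain R]
    {k : ι → ℕ} {c : ι → M} {e : ι → Module.End R M} (h : IsPrimaryCyclicDecomposition p k c e)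
    (hp : p ≠ 0) (hres : ∀ a, p ∣ a ∨ p ∣ a - 1) (hmn : m + 1 < n)
    (hx : x ∈ torsionBy R M (p ^ (m + 1))) (hxm : x ∉ layerBase R M p m)
    (hy : y ∈ torsionBy R M (p ^ (n + 1))) (hyn : y ∉ layerBase R M p n) :
    ¬(gluingBase R M p m n ⊔ R ∙ (x + p • y)).IsFullyInvariant := by
  intro hinv
  obtain ⟨E, hEx, hEy⟩ := h.exists_end_sub_mem_layerBase hp m
  have hpz : p • (x + p • y) ∈ gluingBase R M p m n := by
    rw [smul_add]
    exact add_smul_mem_gluingBase (smul_mem_layerBase hx) (smul_mem_layerBase hy)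
  have hEz : x - E (x + p • y) ∈ gluingBase R M p m n := by
    have := add_smul_mem_gluingBase (hEx x hx) (neg_mem (hEy n (by omega) y hy))
    convert this using 1
    rw [map_add, map_smul, smul_neg]
    abel
  rcases mem_sup_span_singleton_of_residues hres hpz
    (hinv E (mem_sup_right (mem_span_singleton_self _))) with hmem | hmem
  · exact hxm (mem_layerBase_of_mem_gluingBase hx ((sub_mem_iff_left _ hmem).1 hEz))
  · refine hyn (mem_layerBase_of_smul_mem_gluingBase hmn (neg_mem_iff.1 ?_))
    convert add_mem hEz hmem using 1
    abel

end Diagonal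

theorem exists_isCharacteristicSubmodule_not_isFullyInvariant_iff {R M : Type*} [CommRing R]
    [IsDomain R] [IsPrincipalIdealRing R] [AddCommGroup M] [Module R M] [Module.Finite R M] {p : R}
    (hp : Prime p) (hM : Module.IsTorsion' M (Submonoid.powers p)) :
    (∃ Y : Submodule R M, IsCharacteristicSubmodule Y ∧ ¬Y.IsFullyInvariant) ↔
      Nat.card (R ⧸ Ideal.span {p}) = 2 ∧
        ∃ m n, m + 1 < n ∧ layerIndex R M p m = 2 ∧ layerIndex R M p n = 2 := by
  obtain ⟨d, k, c, e, h⟩ :=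
    IsPrimaryCyclicDecomposition.exists_of_isTorsion'_powers hp.irreducible hM
  rw [natCard_quotient_span_singleton_eq_two_iff hp.not_isUnit]
  constructor
  · rintro ⟨Y, hY, hYn⟩
    obtain ⟨i, j, hij, hi, hj⟩ := h.exists_not_le_comap_of_not_isFullyInvariant hp hY hYn
    have hres (a : R) : p ∣ a ∨ p ∣ a - 1 := by
      by_contra! ha
      exact hi (h.le_comap_of_not_dvd_of_not_dvd_sub_one hp hY ha.1 ha.2 i)
    have layerIndex_eq_two {i : Fin d} (hi : ¬Y ≤ Y.comap (e i)) :
        layerIndex R M p (k i - 1) = 2 := by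
      have hki : k i = k i - 1 + 1 :=
        (Nat.succ_pred fun h0 => hi (h.le_comap_of_exponent_eq_zero h0)).symm
      refine h.layerIndex_eq_two hp hres hki fun j hji hkj => hi ?_
      exact h.le_comap_of_exponent_eq hY hji.symm (hki.trans hkj.symm)
    have hki : k i ≠ 0 := fun h0 => hi (h.le_comap_of_exponent_eq_zero h0)
    exact ⟨hres, k i - 1, k j - 1, by omega, layerIndex_eq_two hi, layerIndex_eq_two hj⟩
  · rintro ⟨hres, m, n, hmn, hm, hn⟩
    obtain ⟨x, hx, hxm, -⟩ := layerIndex_eq_two_iff.1 hm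
    obtain ⟨y, hy, hyn, -⟩ := layerIndex_eq_two_iff.1 hn
    exact ⟨_, isCharacteristicSubmodule_gluingBase_sup_span hm hn hx hxm hy hyn,
      not_isFullyInvariant_gluingBase_sup_span h hp.ne_zero hres hmn hx hxm hy hyn⟩

section LinearEndomorphism

open Polynomial Module

variable {F V : Type*} [Field F] [AddCommGroup V] [Module F V]

/-- An endomorphism commuting with `A` is the same as an `F[X]`-linear endomorphism of `V` with `X`
acting as `A`. -/
noncomputable def commutantEquiv (A : Module.End F V) :
    {g : Module.End F V // Commute g A} ≃ Module.End F[X] (AEval' A) where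
  toFun g := LinearMap.ofAEval A (AEval'.of A ∘ₗ g.1) fun v =>
    (congrArg (AEval'.of A) (LinearMap.congr_fun g.2 v)).trans (AEval'.X_smul_of A (g.1 v)).symm
  invFun f := ⟨(AEval'.of A).symm.conj (f.restrictScalars F), LinearMap.ext fun v => calc
    (AEval'.of A).symm (f (AEval'.of A (A v)))
      = (AEval'.of A).symm (f ((X : F[X]) • AEval'.of A v)) := by rw [AEval'.X_smul_of]
    _ = A ((AEval'.of A).symm (f (AEval'.of A v))) := by rw [map_smul, AEval'.of_symm_X_smul]⟩
  left_inv g := by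
    ext v
    rfl
  right_inv f := by
    ext v
    rfl

theorem isUnit_commutantEquiv_iff {A : Module.End F V} (g : {g : Module.End F V // Commute g A}) :
    IsUnit (commutantEquiv A g) ↔ IsUnit g.1 := by
  rw [Module.End.isUnit_iff, Module.End.isUnit_iff]
  exact Iff.rfl

theorem hyperinvariantSubspace_mapSubmodule_symm_iff {A : Module.End F V}
    {Z : Submodule F[X] (AEval' A)} :
    HyperinvariantSubspace A ((AEval.mapSubmodule F V A).symm Z) ↔ Z.IsFullyInvariant := by
  rw [Submodule.IsFullyInvariant, ← (commutantEquiv A).forall_congr_right, Subtype.forall]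
  rfl

theorem characteristicSubspace_mapSubmodule_symm_iff {A : Module.End F V}
    {Z : Submodule F[X] (AEval' A)} :
    CharacteristicSubspace A ((AEval.mapSubmodule F V A).symm Z) ↔ IsCharacteristicSubmodule Z := by
  rw [IsCharacteristicSubmodule, ← (commutantEquiv A).forall_congr_right, Subtype.forall]
  simp_rw [isUnit_commutantEquiv_iff]
  refine ⟨fun h g hg hu => h.2 g hu hg, fun h => ⟨?_, fun g hu hg => h g hg hu⟩⟩
  exact ((AEval.mapSubmodule F V A).symm Z).2

theorem exists_characteristicSubspace_not_hyperinvariantSubspace_iff (A : Module.End F V) :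
    (∃ Y : Submodule F V, CharacteristicSubspace A Y ∧ ¬HyperinvariantSubspace A Y) ↔
      ∃ Z : Submodule F[X] (AEval' A), IsCharacteristicSubmodule Z ∧ ¬Z.IsFullyInvariant := by
  simp_rw [← hyperinvariantSubspace_mapSubmodule_symm_iff,
    ← characteristicSubspace_mapSubmodule_symm_iff]
  refine ⟨fun ⟨Y, hY⟩ => ⟨AEval.mapSubmodule F V A ⟨Y, hY.1.1⟩, ?_⟩, fun ⟨Z, hZ⟩ => ⟨_, hZ⟩⟩
  rwa [OrderIso.symm_apply_apply]

theorem isTorsion'_powers_of_aeval_pow_eq_zero {A : Module.End F V} {p : F[X]} {r : ℕ}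
    (hA : aeval A (p ^ r) = 0) : IsTorsion' (AEval' A) (Submonoid.powers p) := by
  refine (isTorsion'_powers_iff p).2 fun v => ⟨r, ?_⟩
  rw [← (AEval'.of A).apply_symm_apply v, ← AEval.of_aeval_smul, hA, zero_smul, map_zero]

theorem natCard_torsionBy_aeval_pow [FiniteDimensional F V] (A : Module.End F V)
    (p : F[X]) (n : ℕ) :
    Nat.card (torsionBy F[X] (AEval' A) (p ^ n)) =
      Nat.card F ^ finrank F (LinearMap.ker (aeval A p ^ n)) := by
  rw [← natCard_eq_pow_finrank, ← map_pow]
  refine Nat.card_congr ((AEval'.of A).symm.toEquiv.subtypeEquiv fun v => ?_)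
  rw [LinearMap.mem_ker, mem_torsionBy_iff, ← (AEval'.of A).symm.map_eq_zero_iff,
    AEval.of_symm_smul]
  rfl

theorem layerIndex_aeval_eq_natCard_iff [Finite F] [FiniteDimensional F V] (A : Module.End F V)
    (p : F[X]) (n : ℕ) :
    layerIndex F[X] (AEval' A) p n = Nat.card F ↔
      2 * finrank F (LinearMap.ker (aeval A p ^ (n + 1))) =
        finrank F (LinearMap.ker (aeval A p ^ n)) +
          finrank F (LinearMap.ker (aeval A p ^ (n + 2))) + 1 := by
  have : Finite (AEval' A) := Module.finite_of_finite F
  have hq : 1 < Nat.card F := Finite.one_lt_card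
  have hcard := natCard_torsionBy_pow_sq (R := F[X]) (M := AEval' A) (p := p) n
  simp_rw [natCard_torsionBy_aeval_pow, ← pow_mul, ← pow_add] at hcard
  refine Iff.trans ?_ (Nat.pow_right_inj hq)
  rw [mul_comm 2, hcard, pow_succ]
  exact (Nat.mul_right_inj (pow_pos (by omega) _).ne').symm

theorem natCard_polynomial_quotient_span_eq_two_iff {p : F[X]} (hp : p ≠ 0) :
    Nat.card (F[X] ⧸ Ideal.span {p}) = 2 ↔ Nat.card F = 2 ∧ ∃ lam, p = X - C lam := by
  have : Module.Finite F (F[X] ⧸ Ideal.span {p}) := (AdjoinRoot.powerBasis hp).finite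
  rw [natCard_eq_pow_finrank (K := F), finrank_quotient_span_eq_natDegree,
    Nat.prime_two.pow_eq_iff]
  refine and_congr_right fun hF => ⟨fun hdeg => ?_, ?_⟩
  · obtain ⟨a, ha, b, rfl⟩ := natDegree_eq_one.1 hdeg
    obtain ⟨u, -, hu⟩ := (Nat.card_eq_two_iff' (0 : F)).1 hF
    exact ⟨-b, by rw [hu a ha, ← hu 1 one_ne_zero, C_1, one_mul, C_neg, sub_neg_eq_add]⟩
  · rintro ⟨lam, rfl⟩
    exact natDegree_X_sub_C lam

end LinearEndomorphism

theorem char_not_hyperinv_iff_card_two_deg_one_shoda_general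
    {F V : Type*} [Field F] [AddCommGroup V] [Module F V] [FiniteDimensional F V]
    (A : Module.End F V) (p : Polynomial F) (r : ℕ) (hirr : Irreducible p)
    (hA : Polynomial.aeval A (p ^ r) = 0) :
    (∃ Y : Submodule F V,
        CharacteristicSubspace A Y ∧ ¬ HyperinvariantSubspace A Y) ↔
      Nat.card F = 2 ∧
      ∃ lam : F, p = Polynomial.X - Polynomial.C lam ∧
        ∃ r' s : ℕ, 0 < r' ∧ r' + 1 < s ∧
          (2 * Module.finrank F (LinearMap.ker ((A - lam • 1) ^ s)) =
            Module.finrank F (LinearMap.ker ((A - lam • 1) ^ (s - 1))) +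
            Module.finrank F (LinearMap.ker ((A - lam • 1) ^ (s + 1))) + 1) ∧
          (2 * Module.finrank F (LinearMap.ker ((A - lam • 1) ^ r')) =
            Module.finrank F (LinearMap.ker ((A - lam • 1) ^ (r' - 1))) +
            Module.finrank F (LinearMap.ker ((A - lam • 1) ^ (r' + 1))) + 1) := by
  rw [exists_characteristicSubspace_not_hyperinvariantSubspace_iff,
    exists_isCharacteristicSubmodule_not_isFullyInvariant_iff hirr.prime
      (isTorsion'_powers_of_aeval_pow_eq_zero hA),
    natCard_polynomial_quotient_span_eq_two_iff hirr.ne_zero, and_assoc, ← exists_and_right]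
  refine and_congr_right fun hF => exists_congr fun lam => and_congr_right fun hlam => ?_
  have : Finite F := Nat.finite_of_card_ne_zero (by omega)
  have hN : A - lam • 1 = Polynomial.aeval A p := by
    simp [hlam, Algebra.algebraMap_eq_smul_one]
  have hlayer (n : ℕ) := layerIndex_aeval_eq_natCard_iff A p n
  simp_rw [hF] at hlayer
  simp_rw [hlayer]
  rw [hN]
  constructor
  · rintro ⟨m, n, hmn, hm, hn⟩
    exact ⟨m + 1, n + 1, m.succ_pos, by omega, hn, hm⟩
  · rintro ⟨_ | m, _ | n, hm0, hmn, hn, hm⟩ <;> try omega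
    exact ⟨m, n, by omega, hm, hn⟩

/-- If the minimal polynomial of `A` is `p ^ r` with `p` irreducible and
separable, then a characteristic non-hyperinvariant subspace for `A` exists iff `F` has
exactly two elements, `p = x − λ` has degree 1 (so that `N = A − λ·id` is nilpotent), and
for some `r', s` with `s > r' + 1` the Jordan form of `N` has exactly one block of size `s`
and exactly one block of size `r'` (block counts expressed via kernel dimensions). -/
theorem char_not_hyperinv_iff_card_two_deg_one_shoda
    {F V : Type*} [Field F] [AddCommGroup V] [Module F V] [FiniteDimensional F V]
    (A : Module.End F V) (p : Polynomial F) (r : ℕ) (hr : 0 < r)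
    (hirr : Irreducible p) (hsep : p.Separable)
    (hmin : minpoly F A = p ^ r) :
    (∃ Y : Submodule F V,
        CharacteristicSubspace A Y ∧ ¬ HyperinvariantSubspace A Y) ↔
      Nat.card F = 2 ∧
      ∃ lam : F, p = Polynomial.X - Polynomial.C lam ∧
        ∃ r' s : ℕ, 0 < r' ∧ r' + 1 < s ∧
          (2 * Module.finrank F (LinearMap.ker ((A - lam • 1) ^ s)) =
            Module.finrank F (LinearMap.ker ((A - lam • 1) ^ (s - 1))) +
            Module.finrank F (LinearMap.ker ((A - lam • 1) ^ (s + 1))) + 1) ∧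
          (2 * Module.finrank F (LinearMap.ker ((A - lam • 1) ^ r')) =
            Module.finrank F (LinearMap.ker ((A - lam • 1) ^ (r' - 1))) +
            Module.finrank F (LinearMap.ker ((A - lam • 1) ^ (r' + 1))) + 1) := by
  refine char_not_hyperinv_iff_card_two_deg_one_shoda_general A p r hirr ?_
  rw [← hmin, minpoly.aeval]
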